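/- Let N ≥ 1, let μ_1,…,μ_N ∈ ℂ with Re μ_j ≠ 0 for every j, let α₀ > 0 and C ≥ α₀, and let V_1,…,V_N : [0,∞) → ℝ be measurable with α₀ ≤ V_j(s) ≤ C for all s ≥ 0 and all j. Define Q(t) := ∑_{j=1}^N (Re μ_j)² ∫₀ᵗ V_j(s) ds. Suppose E : [0,∞) → ℝ is continuous with E(0) > 0 and satisfies E(t) = E(0) − 2 ∑_{j=1}^N ∫₀ᵗ (Re μ_j)² V_j(s) E(s) ds for all t ≥ 0, and suppose m : [0,∞) → ℝ satisfies m(t)/Q(t) → 0 as t → ∞. Then ω := 2 α₀ ∑_{j=1}^N (Re μ_j)² is strictly positive and limsup_{t→∞} (1/t) · log( e^{2 m(t)} E(t) ) ≤ −ω. -/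

import Mathlib

open MeasureTheory Real Filter

/-!
With `Q(t) = ∑ j (Re μ j)² ∫₀ᵗ V j`, the energy identity is a linear Volterra equation with a merely
integrable rate. Both sides are absolutely continuous, so the integrating factor `exp (2 Q)` still
applies and gives `E t = E 0 * exp (-2 Q t)`. Hence
`(1 / t) log (exp (2 m t) * E t) = (2 Q t / t) (m t / Q t - 1) + log (E 0) / t`.
The factor `m / Q - 1` tends to `-1`, so a lower bound on `2 Q t / t` is an upper bound for the
product. The upper bound on `Q t / t` keeps the left side from tending to `-∞`, where the
real-valued `limsup` would take the junk value `0`.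
-/

section AbsolutelyContinuous

variable {Y : Type*} [PseudoMetricSpace Y] {a b : ℝ}

lemma absolutelyContinuousOnInterval_lipschitzOnWith_comp {X : Type*} [PseudoMetricSpace X]
    {f : ℝ → X} {g : X → Y} {K : NNReal} (hg : LipschitzOnWith K g (f '' Set.uIcc a b))
    (hf : AbsolutelyContinuousOnInterval f a b) :
    AbsolutelyContinuousOnInterval (fun x => g (f x)) a b := by
  refine squeeze_zero' (.of_forall fun I => Finset.sum_nonneg fun _ _ => dist_nonneg) ?_
    (by simpa only [mul_zero] using Tendsto.const_mul (K : ℝ) hf)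
  filter_upwards [mem_inf_of_right (mem_principal_self _)] with I hI
  rw [Finset.mul_sum]
  refine Finset.sum_le_sum fun i hi => ?_
  obtain ⟨hleft, hright⟩ := hI.1 i hi
  exact hg.dist_le_mul _ (Set.mem_image_of_mem f hleft) _ (Set.mem_image_of_mem f hright)

lemma absolutelyContinuousOnInterval_locallyLipschitz_comp {F : Type*} [SeminormedAddCommGroup F]
    {f : ℝ → F} {g : F → Y} (hg : LocallyLipschitz g)
    (hf : AbsolutelyContinuousOnInterval f a b) :
    AbsolutelyContinuousOnInterval (fun x => g (f x)) a b := by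
  have hcompact : IsCompact (f '' Set.uIcc a b) :=
    isCompact_uIcc.image_of_continuousOn hf.continuousOn
  obtain ⟨K, hK⟩ := hg.locallyLipschitzOn.exists_lipschitzOnWith_of_compact hcompact
  exact absolutelyContinuousOnInterval_lipschitzOnWith_comp hK hf

end AbsolutelyContinuous

section Volterra

variable {E : ℝ → ℝ} {a b : ℝ}

theorem eq_mul_exp_integral_of_eq_add_integral_mul {w : ℝ → ℝ}
    (hw : IntervalIntegrable w volume a b) (hE : ContinuousOn E (Set.uIcc a b))
    (hEw : ∀ t ∈ Set.uIcc a b, E t = E a + ∫ s in a..t, w s * E s) :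
    E b = E a * exp (∫ s in a..b, w s) := by
  have hwE : IntervalIntegrable (fun s => w s * E s) volume a b := hw.mul_continuousOn hE
  set W : ℝ → ℝ := fun t => ∫ s in a..t, w s
  set F : ℝ → ℝ := fun t => E a + ∫ s in a..t, w s * E s
  have hW_ac : AbsolutelyContinuousOnInterval W a b :=
    hw.absolutelyContinuousOnInterval_intervalIntegral Set.left_mem_uIcc
  have hexp_ac : AbsolutelyContinuousOnInterval (fun t => exp (-W t)) a b :=
    absolutelyContinuousOnInterval_locallyLipschitz_comp contDiff_exp.locallyLipschitz hW_ac.fun_neg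
  have hF_ac : AbsolutelyContinuousOnInterval F a b :=
    contDiffOn_const.absolutelyContinuousOnInterval.fun_add
      (hwE.absolutelyContinuousOnInterval_intervalIntegral Set.left_mem_uIcc)
  have hderiv : ∀ᵐ t, t ∈ Set.uIcc a b → HasDerivAt (fun t => F t * exp (-W t)) 0 t := by
    filter_upwards [hw.ae_hasDerivAt_integral, hwE.ae_hasDerivAt_integral] with t hW' hF' ht
    have hF_deriv : HasDerivAt F (w t * E t) t := (hF' ht a Set.left_mem_uIcc).const_add (E a)
    refine (hF_deriv.mul (hW' ht a Set.left_mem_uIcc).neg.exp).congr_deriv ?_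
    rw [show F t = E t from (hEw t ht).symm]
    ring
  obtain ⟨c, hc⟩ := (hF_ac.fun_mul hexp_ac).const_of_ae_hasDerivAt_zero hderiv
  have hleft : E a = c := by simpa [F, W] using hc a Set.left_mem_uIcc
  have hright : E b * exp (-W b) = c := by
    rw [hEw b Set.right_mem_uIcc]
    exact hc b Set.right_mem_uIcc
  rw [hleft, ← hright, mul_assoc, ← exp_add, neg_add_cancel, exp_zero, mul_one]

theorem eq_mul_exp_of_eq_add_sum_integral_mul {ι : Type*} [Fintype ι] {w : ι → ℝ → ℝ}
    (hw : ∀ j, IntervalIntegrable (w j) volume a b) (hE : ContinuousOn E (Set.uIcc a b))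
    (hEw : ∀ t ∈ Set.uIcc a b, E t = E a + ∑ j, ∫ s in a..t, w j s * E s) :
    E b = E a * exp (∑ j, ∫ s in a..b, w j s) := by
  rw [← intervalIntegral.integral_finsetSum fun j _ => hw j]
  refine eq_mul_exp_integral_of_eq_add_integral_mul
    (by simpa only [Finset.sum_fn] using IntervalIntegrable.sum Finset.univ fun j _ => hw j) hE
    fun t ht => ?_
  have hsub : Set.uIcc a t ⊆ Set.uIcc a b := Set.uIcc_subset_uIcc_left ht
  simp only [Finset.sum_mul]
  rw [hEw t ht, intervalIntegral.integral_finsetSum fun j _ =>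
    ((hw j).mono_set hsub).mul_continuousOn (hE.mono hsub)]

theorem eq_mul_exp_neg_two_mul_sum_of_energy_identity {ι : Type*} [Fintype ι] {k : ι → ℝ}
    {V : ι → ℝ → ℝ} (hab : a ≤ b) (hV : ∀ j, IntervalIntegrable (V j) volume a b)
    (hE : ContinuousOn E (Set.Icc a b))
    (hEV : ∀ t ∈ Set.Icc a b, E t = E a - 2 * ∑ j, ∫ s in a..t, k j * V j s * E s) :
    E b = E a * exp (-(2 * ∑ j, k j * ∫ s in a..b, V j s)) := by
  rw [← Set.uIcc_of_le hab] at hE hEV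
  have hE_exp := eq_mul_exp_of_eq_add_sum_integral_mul (w := fun j s => -(2 * k j) * V j s)
    (fun j => (hV j).const_mul _) hE fun t ht => by
      rw [hEV t ht, sub_eq_add_neg, Finset.mul_sum, ← Finset.sum_neg_distrib]
      simp only [neg_mul, mul_assoc, intervalIntegral.integral_neg,
        intervalIntegral.integral_const_mul]
  simpa only [neg_mul, mul_assoc, intervalIntegral.integral_neg,
    intervalIntegral.integral_const_mul, Finset.sum_neg_distrib, ← Finset.mul_sum] using hE_exp

end Volterra

section Bounds

variable {f : ℝ → ℝ} {a b l u : ℝ}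

lemma intervalIntegrable_of_forall_mem_Icc (hab : a ≤ b) (hf : Measurable f)
    (hmem : ∀ x ∈ Set.Icc a b, f x ∈ Set.Icc l u) : IntervalIntegrable f volume a b := by
  rw [intervalIntegrable_iff_integrableOn_Icc_of_le hab]
  exact .of_mem_Icc l u hf.aemeasurable (ae_restrict_of_forall_mem measurableSet_Icc hmem)

lemma integral_mem_Icc_of_forall_mem_Icc (hab : a ≤ b)
    (hf : IntervalIntegrable f volume a b) (hmem : ∀ x ∈ Set.Icc a b, f x ∈ Set.Icc l u) :
    ∫ x in a..b, f x ∈ Set.Icc (l * (b - a)) (u * (b - a)) := by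
  have hlower := intervalIntegral.integral_mono_on hab intervalIntegrable_const hf
    fun x hx => (hmem x hx).1
  have hupper := intervalIntegral.integral_mono_on hab hf intervalIntegrable_const
    fun x hx => (hmem x hx).2
  rw [intervalIntegral.integral_const, smul_eq_mul, mul_comm] at hlower hupper
  exact ⟨hlower, hupper⟩

end Bounds

section Limsup

theorem limsup_mul_add_le {α : Type*} {F : Filter α} {q g r : α → ℝ} {l u x y : ℝ}
    (hl : ∀ᶠ t in F, l ≤ q t) (hu : ∃ᶠ t in F, q t ≤ u)
    (hg : Tendsto g F (nhds x)) (hx : x < 0) (hr : Tendsto r F (nhds y)) :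
    limsup (fun t => q t * g t + r t) F ≤ l * x + y := by
  have : NeBot F := ⟨by rintro rfl; exact hu eventually_bot⟩
  have hg_neg : ∀ᶠ t in F, g t < 0 := hg.eventually_lt_const hx
  have hmajorant : Tendsto (fun t => l * g t + r t) F (nhds (l * x + y)) := (hg.const_mul l).add hr
  have hminorant : Tendsto (fun t => u * g t + r t) F (nhds (u * x + y)) := (hg.const_mul u).add hr
  have hcobounded : IsCoboundedUnder (· ≤ ·) F fun t => q t * g t + r t := by
    refine .of_frequently_ge (a := u * x + y - 1) ?_
    refine (hu.and_eventually
      (hg_neg.and (hminorant.eventually_const_lt (sub_one_lt _)))).mono ?_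
    rintro t ⟨hqt, hgt, hlt⟩
    exact hlt.le.trans (add_le_add_left (mul_le_mul_of_nonpos_right hqt hgt.le) _)
  rw [← hmajorant.limsup_eq]
  refine limsup_le_limsup ?_ hcobounded hmajorant.isBoundedUnder_le
  filter_upwards [hl, hg_neg] with t hqt hgt
  exact add_le_add_left (mul_le_mul_of_nonpos_right hqt hgt.le) _

theorem limsup_log_exp_mul_exp_neg_le {M A : ℝ → ℝ} {c l u : ℝ} (hc : c ≠ 0) (hl_pos : 0 < l)
    (hl : ∀ᶠ t in atTop, l * t ≤ A t) (hu : ∃ᶠ t in atTop, A t ≤ u * t)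
    (hM : Tendsto (fun t => M t / A t) atTop (nhds 0)) :
    limsup (fun t => 1 / t * log (exp (M t) * (c * exp (-A t)))) atTop ≤ -l := by
  have hlog : ∀ᶠ t in atTop, 1 / t * log (exp (M t) * (c * exp (-A t))) =
      A t / t * (M t / A t - 1) + log c / t := by
    filter_upwards [hl, eventually_gt_atTop 0] with t hlt ht
    have hA : 0 < A t := (mul_pos hl_pos ht).trans_le hlt
    rw [log_mul (exp_ne_zero _) (mul_ne_zero hc (exp_ne_zero _)), log_mul hc (exp_ne_zero _),
      log_exp, log_exp]
    field
  have hlower : ∀ᶠ t in atTop, l ≤ A t / t := by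
    filter_upwards [hl, eventually_gt_atTop 0] with t hlt ht using (le_div_iff₀ ht).2 hlt
  have hupper : ∃ᶠ t in atTop, A t / t ≤ u :=
    (hu.and_eventually (eventually_gt_atTop 0)).mono fun t ht => (div_le_iff₀ ht.2).2 ht.1
  rw [limsup_congr hlog]
  simpa using limsup_mul_add_le hlower hupper (hM.sub_const 1) (by norm_num)
    (tendsto_const_nhds.div_atTop tendsto_id)

end Limsup

theorem stmt_3_general {ι : Type*} [Fintype ι] {μ : ι → ℂ} (hμ : ∃ j, (μ j).re ≠ 0)
    {α₀ C : ℝ} (hα₀ : 0 < α₀) {V : ι → ℝ → ℝ}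
    (hVint : ∀ j, ∀ t ≥ (0 : ℝ), IntervalIntegrable (V j) volume 0 t)
    (hVmean : ∀ j, ∀ᶠ t in atTop, ∫ s in (0 : ℝ)..t, V j s ∈ Set.Icc (α₀ * t) (C * t))
    {Q : ℝ → ℝ} (hQ : ∀ t ≥ (0 : ℝ), Q t = ∑ j, (μ j).re ^ 2 * ∫ s in (0 : ℝ)..t, V j s)
    {E : ℝ → ℝ} (hEcont : ContinuousOn E (Set.Ici 0)) (hE0 : 0 < E 0)
    (hE : ∀ t ≥ (0 : ℝ),
      E t = E 0 - 2 * ∑ j, ∫ s in (0 : ℝ)..t, (μ j).re ^ 2 * V j s * E s)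
    {m : ℝ → ℝ} (hm : Tendsto (fun t => m t / Q t) atTop (nhds 0)) :
    0 < 2 * α₀ * ∑ j, (μ j).re ^ 2 ∧
    limsup (fun t => (1 / t) * log (exp (2 * m t) * E t)) atTop
      ≤ -(2 * α₀ * ∑ j, (μ j).re ^ 2) := by
  obtain ⟨j₀, hj₀⟩ := hμ
  have hsum_pos : 0 < ∑ j, (μ j).re ^ 2 :=
    Finset.sum_pos' (fun j _ => sq_nonneg _) ⟨j₀, Finset.mem_univ _, by positivity⟩
  have hω : 0 < 2 * α₀ * ∑ j, (μ j).re ^ 2 := by positivity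
  have hE_exp : ∀ t ≥ (0 : ℝ), E t = E 0 * exp (-(2 * Q t)) := fun t ht => by
    rw [hQ t ht]
    exact eq_mul_exp_neg_two_mul_sum_of_energy_identity ht (fun j => hVint j t ht)
      (hEcont.mono Set.Icc_subset_Ici_self) fun s hs => hE s hs.1
  have hQ_mem : ∀ᶠ t in atTop, Q t ∈
      Set.Icc ((∑ j, (μ j).re ^ 2) * (α₀ * t)) ((∑ j, (μ j).re ^ 2) * (C * t)) := by
    filter_upwards [eventually_all.2 hVmean, eventually_ge_atTop 0] with t hmean ht
    rw [hQ t ht, Finset.sum_mul, Finset.sum_mul]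
    exact ⟨Finset.sum_le_sum fun j _ => mul_le_mul_of_nonneg_left (hmean j).1 (sq_nonneg _),
      Finset.sum_le_sum fun j _ => mul_le_mul_of_nonneg_left (hmean j).2 (sq_nonneg _)⟩
  refine ⟨hω, ?_⟩
  rw [limsup_congr (v := fun t => 1 / t * log (exp (2 * m t) * (E 0 * exp (-(2 * Q t)))))
    ((eventually_ge_atTop 0).mono fun t ht => by rw [hE_exp t ht])]
  refine limsup_log_exp_mul_exp_neg_le (u := 2 * C * ∑ j, (μ j).re ^ 2) hE0.ne' hω
    (hQ_mem.mono fun t ht => by linarith [ht.1])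
    (hQ_mem.mono fun t ht => by linarith [ht.2]).frequently ?_
  simpa only [mul_div_mul_left _ _ (two_ne_zero' ℝ)] using hm

/-- Full deterministic skeleton of the proof of Theorem 1.5: energy decay combined
with the martingale strong law of large numbers `m(t)/Q(t) → 0`, where
`Q(t) = ∑ j (Re μ j)² ∫₀ᵗ V j` is the quadratic variation of `Re M`. -/
theorem stmt_3 (N : ℕ) (hN : 1 ≤ N) (μ : Fin N → ℂ)
    (hμ : ∀ j, (μ j).re ≠ 0)
    (α₀ C : ℝ) (hα₀ : 0 < α₀) (hC : α₀ ≤ C)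
    (V : Fin N → ℝ → ℝ) (hVmeas : ∀ j, Measurable (V j))
    (hVlb : ∀ j, ∀ s ≥ (0:ℝ), α₀ ≤ V j s)
    (hVub : ∀ j, ∀ s ≥ (0:ℝ), V j s ≤ C)
    (Q : ℝ → ℝ)
    (hQ : ∀ t, Q t = ∑ j, (μ j).re ^ 2 * ∫ s in (0:ℝ)..t, V j s)
    (E : ℝ → ℝ) (hEcont : ContinuousOn E (Set.Ici 0)) (hE0 : 0 < E 0)
    (hE : ∀ t ≥ (0:ℝ),
      E t = E 0 - 2 * ∑ j, ∫ s in (0:ℝ)..t, (μ j).re ^ 2 * V j s * E s)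
    (m : ℝ → ℝ) (hm : Tendsto (fun t => m t / Q t) atTop (nhds 0)) :
    0 < 2 * α₀ * ∑ j, (μ j).re ^ 2 ∧
    Filter.limsup (fun t => (1 / t) * Real.log (Real.exp (2 * m t) * E t)) atTop
      ≤ -(2 * α₀ * ∑ j, (μ j).re ^ 2) := by
  have hVmem (j) (t : ℝ) : ∀ s ∈ Set.Icc 0 t, V j s ∈ Set.Icc α₀ C :=
    fun s hs => ⟨hVlb j s hs.1, hVub j s hs.1⟩
  have hVint (j) (t : ℝ) (ht : 0 ≤ t) : IntervalIntegrable (V j) volume 0 t :=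
    intervalIntegrable_of_forall_mem_Icc ht (hVmeas j) (hVmem j t)
  have hVmean (j) : ∀ᶠ t in atTop, ∫ s in (0 : ℝ)..t, V j s ∈ Set.Icc (α₀ * t) (C * t) :=
    (eventually_ge_atTop 0).mono fun t ht => by
      simpa only [sub_zero] using
        integral_mem_Icc_of_forall_mem_Icc ht (hVint j t ht) (hVmem j t)
  exact stmt_3_general ⟨⟨0, hN⟩, hμ _⟩ hα₀ hVint hVmean (fun t _ => hQ t) hEcont hE0 hE hm
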